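/- Let E be a compact convex subset of a finite-dimensional real vector space and let F ⊆ E be a face of E. Then there exists a finite chain of faces F = F₀ ⊊ F₁ ⊊ ⋯ ⊊ F_k = E which is maximal, in the sense that for each i there is no face of E strictly contained between F_{i−1} and F_i. -/

import Mathlib

/-!
A nonempty convex extreme subset `G` of `E` contains every point of `E` lying in its affine span:
a relative interior point `x` of `G` can be pushed slightly beyond itself, away from such a point
`y`, while staying in `G`, so that `x` lies in an open segment ending at `y`
(`mem_of_mem_affineSpan`). Hence a strict inclusion of nonempty faces strictly enlarges the
direction of the affine span. Since subspaces of `V` satisfy both chain conditions, so do the faces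
of `E`, and in a partial order with both chain conditions any two comparable elements are joined by
a finite chain of covering relations.
-/

/-- A face contains every point of the ambient set that lies in its affine span. -/
theorem mem_of_mem_affineSpan {V : Type*} [NormedAddCommGroup V] [NormedSpace ℝ V]
    [FiniteDimensional ℝ V] {E G : Set V} (hGconv : Convex ℝ G) (hG : IsExtreme ℝ E G)
    (hne : G.Nonempty) {y : V} (hyE : y ∈ E) (hy : y ∈ affineSpan ℝ G) : y ∈ G := by
  obtain ⟨x, hx⟩ := hne.intrinsicInterior hGconv
  have hxG : x ∈ G := intrinsicInterior_subset hx
  obtain ⟨p, hp, rfl⟩ := mem_intrinsicInterior.1 hx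
  have hmem (t : ℝ) : AffineMap.lineMap (p : V) y t ∈ affineSpan ℝ G :=
    AffineMap.lineMap_mem t p.2 hy
  let g : ℝ → affineSpan ℝ G := fun t => ⟨AffineMap.lineMap (p : V) y t, hmem t⟩
  have hg : Continuous g := AffineMap.lineMap_continuous.subtype_mk hmem
  have hg0 : g 0 = p := Subtype.ext (AffineMap.lineMap_apply_zero _ _)
  have hev : ∀ᶠ t in nhds (0 : ℝ), g t ∈ interior ((↑) ⁻¹' G : Set (affineSpan ℝ G)) :=
    hg.continuousAt.eventually (by rw [hg0]; exact isOpen_interior.mem_nhds hp)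
  -- A negative parameter `t` gives a point of `G` on the far side of `p` from `y`.
  obtain ⟨t, htG, ht⟩ := ((hev.filter_mono nhdsWithin_le_nhds).and
    (self_mem_nhdsWithin : Set.Iio (0 : ℝ) ∈ nhdsWithin 0 (Set.Iio 0))).exists
  have hzG : AffineMap.lineMap (p : V) y t ∈ G := by
    have := interior_subset htG
    exact this
  have ht : t < 0 := ht
  have h1 : 0 < 1 - t := by linarith
  refine hG.left_mem_of_mem_openSegment hyE (hG.subset hzG) hxG
    ⟨-t / (1 - t), 1 / (1 - t), div_pos (by linarith) h1, by positivity, by field_simp; ring, ?_⟩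
  rw [AffineMap.lineMap_apply_module]
  match_scalars <;> field_simp
  ring

open Classical in
/-- The direction of the affine span of a set, with the separate least value `⊥` for the empty set,
so that the empty face is distinguished from the singleton faces. -/
noncomputable def faceDirection {V : Type*} [AddCommGroup V] [Module ℝ V] (G : Set V) :
    WithBot (Submodule ℝ V) :=
  if G.Nonempty then (vectorSpan ℝ G : WithBot (Submodule ℝ V)) else ⊥

theorem faceDirection_lt {V : Type*} [NormedAddCommGroup V] [NormedSpace ℝ V]
    [FiniteDimensional ℝ V] {E G H : Set V} (hGconv : Convex ℝ G) (hG : IsExtreme ℝ E G)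
    (hH : H ⊆ E) (hGH : G ⊂ H) : faceDirection G < faceDirection H := by
  have hHne : H.Nonempty := Set.nonempty_of_ssubset' hGH
  by_cases hne : G.Nonempty
  · rw [faceDirection, faceDirection, if_pos hne, if_pos hHne, WithBot.coe_lt_coe]
    refine lt_of_le_of_ne (vectorSpan_mono ℝ hGH.subset) fun heq => hGH.not_subset fun y hy => ?_
    have hspan : affineSpan ℝ G = affineSpan ℝ H :=
      AffineSubspace.eq_of_direction_eq_of_nonempty_of_le
        (by rw [direction_affineSpan, direction_affineSpan, heq])
        (hne.affineSpan ℝ) (affineSpan_mono ℝ hGH.subset)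
    exact mem_of_mem_affineSpan hGconv hG hne (hH hy) (hspan ▸ subset_affineSpan ℝ H hy)
  · rw [faceDirection, faceDirection, if_neg hne, if_pos hHne]
    exact WithBot.bot_lt_coe _


/-- Let `E` be a compact convex subset of a finite-dimensional real vector
space and `F ⊆ E` a face of `E`.  Then there is a finite chain of faces
`F = F₀ ⊊ F₁ ⊊ ⋯ ⊊ F_k = E` which is maximal, in the sense that for each `i` there is no
face of `E` strictly between `F_{i-1}` and `F_i`. -/
theorem stmt_2 {V : Type*} [NormedAddCommGroup V] [NormedSpace ℝ V] [FiniteDimensional ℝ V]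
    (E F : Set V) (hEconv : Convex ℝ E) (hEcomp : IsCompact E)
    (hFconv : Convex ℝ F) (hF : IsExtreme ℝ E F) :
    ∃ (k : ℕ) (c : Fin (k + 1) → Set V),
      c 0 = F ∧ c (Fin.last k) = E ∧
      (∀ i, Convex ℝ (c i) ∧ IsExtreme ℝ E (c i)) ∧
      (∀ i : Fin k, c i.castSucc ⊂ c i.succ) ∧
      (∀ i : Fin k, ∀ G : Set V, Convex ℝ G → IsExtreme ℝ E G →
        ¬(c i.castSucc ⊂ G ∧ G ⊂ c i.succ)) := by
  let α := {G : Set V // Convex ℝ G ∧ IsExtreme ℝ E G}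
  have hmono : StrictMono fun G : α => faceDirection G.1 := fun G H h =>
    faceDirection_lt G.2.1 G.2.2 H.2.2.subset h
  have : WellFoundedLT α := hmono.wellFoundedLT
  have : WellFoundedGT α := hmono.wellFoundedGT
  obtain ⟨a, h0, n, hn, hcov⟩ := exists_covBy_seq_of_wellFoundedLT_wellFoundedGT_of_le
    (α := α) (x := ⟨F, hFconv, hF⟩) (y := ⟨E, hEconv, .rfl⟩) hF.subset
  refine ⟨n, fun i => (a i).1, congrArg Subtype.val h0, congrArg Subtype.val hn,
    fun i => (a i).2, fun i => (hcov i i.2).1, fun i G hGconv hG h => ?_⟩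
  exact (hcov i i.2).2 (c := ⟨G, hGconv, hG⟩) h.1 h.2
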